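/- Let Ω ⊂ ℝ² be a bounded open set whose boundary consists of two disjoint connected components Γ₁ and Γ₂, each a smooth Jordan curve, and let Ω' be the bounded connected component of ℝ² \ closure(Ω), with ∂Ω' = Γ₂. Suppose μ ∈ ℝ and u is twice continuously differentiable on an open neighborhood of closure(Ω) with Δu + μu = 0 in Ω, ∇u = 0 at every point of ∂Ω, u ≡ c₁ on Γ₁ and u ≡ c₂ on Γ₂. Define v : ℝ² → ℝ² by v = (∂u/∂x₂, −∂u/∂x₁) on closure(Ω) and v = 0 elsewhere, and p : ℝ² → ℝ by p = 0 on the unbounded component of ℝ² \ closure(Ω ∪ Ω'), p = −(1/2)(|∇u|² + μu² − μc₁²) on closure(Ω), and p = −(1/2)μ(c₂² − c₁²) on Ω'. Then p is continuous on ℝ², and for every smooth compactly supported vector field w : ℝ² → ℝ² one has ∫_{ℝ²} ( Σ_{i,j=1}^2 v_i v_j ∂_i w_j + p · div w ) dx = 0; together with the distributional divergence-free property of v, the pair (v,p) is a continuous, compactly supported stationary weak solution of the incompressible Euler equations on ℝ². -/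

import Mathlib

open Real Set MeasureTheory

noncomputable section

abbrev Pt := EuclideanSpace ℝ (Fin 2)

/-- Partial derivative in the `i`-th coordinate direction. -/
def pd (i : Fin 2) (f : Pt → ℝ) (x : Pt) : ℝ := fderiv ℝ f x (EuclideanSpace.single i 1)

/-- The Laplacian of a function on the plane. -/
def lap (f : Pt → ℝ) (x : Pt) : ℝ := pd 0 (pd 0 f) x + pd 1 (pd 1 f) x

/-- A smooth Jordan curve in the plane: the image of a smooth, regular, `2π`-periodic
injective (modulo periods) parametrization. -/
def IsSmoothJordanCurve (Γ : Set Pt) : Prop :=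
  ∃ γ : ℝ → Pt, ContDiff ℝ (⊤ : ℕ∞) γ ∧ Function.Periodic γ (2*π) ∧
    (∀ s t, γ s = γ t → ∃ n : ℤ, s - t = n * (2*π)) ∧
    (∀ t, deriv γ t ≠ 0) ∧ Γ = Set.range γ

/-- Two integrable functions whose integrals are opposite. -/
def NegInt (a b : Pt → ℝ) : Prop := Integrable a ∧ Integrable b ∧ ∫ x, a x = - ∫ x, b x

lemma NegInt.add' {a b c d : Pt → ℝ} (h : NegInt a b) (k : NegInt c d) :
    NegInt (fun x => a x + c x) (fun x => b x + d x) := by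
  obtain ⟨h1, h2, h3⟩ := h
  obtain ⟨k1, k2, k3⟩ := k
  refine ⟨h1.add k1, h2.add k2, ?_⟩
  rw [integral_add h1 k1, integral_add h2 k2, h3, k3]
  ring

lemma NegInt.zero {a b a' : Pt → ℝ} (h : NegInt a b) (hb : ∀ x, b x = 0) (ha : ∀ x, a' x = a x) :
    ∫ x, a' x = 0 := by
  have e : a' = a := funext ha
  rw [e, h.2.2]
  simp [hb]

lemma pd_mul' (i : Fin 2) {a b : Pt → ℝ} {x : Pt} (ha : DifferentiableAt ℝ a x)
    (hb : DifferentiableAt ℝ b x) :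
    pd i (fun y => a y * b y) x = pd i a x * b x + a x * pd i b x := by
  unfold pd
  rw [fderiv_fun_mul ha hb]
  simp
  ring

lemma pd_add' (i : Fin 2) {a b : Pt → ℝ} {x : Pt} (ha : DifferentiableAt ℝ a x)
    (hb : DifferentiableAt ℝ b x) :
    pd i (fun y => a y + b y) x = pd i a x + pd i b x := by
  unfold pd
  rw [fderiv_fun_add ha hb]
  simp

lemma pd_neg' (i : Fin 2) {a : Pt → ℝ} {x : Pt} : pd i (fun y => - a y) x = - pd i a x := by
  unfold pd
  rw [fderiv_fun_neg]
  simp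

lemma pd_const' (i : Fin 2) (c : ℝ) {x : Pt} : pd i (fun _ => c) x = 0 := by
  unfold pd
  simp

lemma pd_contDiff (i : Fin 2) {g : Pt → ℝ} (hg : ContDiff ℝ 2 g) : ContDiff ℝ 1 (pd i g) := by
  unfold pd
  exact (hg.fderiv_right (m := 1) (by norm_num)).clm_apply contDiff_const

lemma pd_comm {g : Pt → ℝ} (hg : ContDiff ℝ 2 g) (x : Pt) :
    pd 0 (pd 1 g) x = pd 1 (pd 0 g) x := by
  have hs : IsSymmSndFDerivAt ℝ g x := hg.contDiffAt.isSymmSndFDerivAt (by simp)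
  have hd : DifferentiableAt ℝ (fderiv ℝ g) x :=
    (hg.fderiv_right (m := 1) (by norm_num)).differentiable (by simp) x
  have key : ∀ i j, pd i (pd j g) x =
      fderiv ℝ (fderiv ℝ g) x (EuclideanSpace.single i 1) (EuclideanSpace.single j 1) := by
    intro i j
    unfold pd
    rw [fderiv_clm_apply hd (differentiableAt_const _)]
    simp
  rw [key, key]
  exact hs _ _

open Filter Topology in
lemma aux_const {g : ℝ → ℝ} (hg : Continuous g) {a b : ℝ} (hab : a ≤ b)
    (h : ∀ t ∈ Ioo a b, ∀ᶠ s in 𝓝 t, g s = g t) : g a = g b := by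
  rcases hab.eq_or_lt with rfl | hab
  · rfl
  have hd : ∀ t ∈ Ioo a b, HasDerivAt g 0 t := fun t ht =>
    (hasDerivAt_const t (g t)).congr_of_eventuallyEq (h t ht)
  obtain ⟨c, hc, h2⟩ := exists_deriv_eq_slope g hab hg.continuousOn
    (fun t ht => (hd t ht).differentiableAt.differentiableWithinAt)
  rw [(hd c hc).deriv] at h2
  have : b - a ≠ 0 := by linarith [sub_pos.2 hab]
  field_simp at h2
  linarith

open Filter Topology in
lemma aux_lip {K : Set Pt} (hK : IsClosed K) {f F : Pt → ℝ} {C : NNReal}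
    (hF : LipschitzWith C F) (hf : Continuous f) (hfF : ∀ x ∈ K, f x = F x)
    (hloc : ∀ x ∉ K, ∀ᶠ y in 𝓝 x, f y = f x) : LipschitzWith C f := by
  apply LipschitzWith.of_dist_le_mul
  intro x y
  let γ : ℝ → Pt := fun t => AffineMap.lineMap x y t
  have hγ : Continuous γ := AffineMap.lineMap_continuous
  have hloc' : ∀ t, γ t ∉ K → ∀ᶠ s in 𝓝 t, f (γ s) = f (γ t) := fun t ht =>
    hγ.continuousAt.eventually (hloc _ ht)
  have h0 : γ 0 = x := by simp [γ]
  have h1 : γ 1 = y := by simp [γ]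
  by_cases hS : ∃ t ∈ Icc (0:ℝ) 1, γ t ∈ K
  · have hcomp : IsCompact (Icc (0:ℝ) 1 ∩ γ ⁻¹' K) :=
      isCompact_Icc.inter_right (hK.preimage hγ)
    have hne : (Icc (0:ℝ) 1 ∩ γ ⁻¹' K).Nonempty := by
      obtain ⟨t, a, b⟩ := hS; exact ⟨t, a, b⟩
    obtain ⟨a, ha, hamin⟩ := hcomp.exists_isLeast hne
    obtain ⟨b, hb, hbmax⟩ := hcomp.exists_isGreatest hne
    have e1 : f (γ 0) = f (γ a) := aux_const (g := fun t => f (γ t)) (hf.comp hγ) ha.1.1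
      (fun t ht => hloc' t (fun hk => by
        have := hamin ⟨⟨ht.1.le, ht.2.le.trans ha.1.2⟩, hk⟩
        linarith [ht.2]))
    have e2 : f (γ b) = f (γ 1) := aux_const (g := fun t => f (γ t)) (hf.comp hγ) hb.1.2
      (fun t ht => hloc' t (fun hk => by
        have := hbmax ⟨⟨hb.1.1.trans ht.1.le, ht.2.le⟩, hk⟩
        linarith [ht.1]))
    rw [← h0, ← h1, e1, ← e2, hfF _ ha.2, hfF _ hb.2]
    refine (hF.dist_le_mul _ _).trans ?_
    gcongr
    rw [h0, h1]
    simp only [γ, dist_lineMap_lineMap]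
    have : dist a b ≤ 1 := by
      rw [Real.dist_eq, abs_le]
      constructor <;> linarith [ha.1.1, ha.1.2, hb.1.1, hb.1.2]
    nlinarith [dist_nonneg (x := x) (y := y)]
  · push Not at hS
    have : f (γ 0) = f (γ 1) := aux_const (g := fun t => f (γ t)) (hf.comp hγ) zero_le_one
      (fun t ht => hloc' t (hS t ⟨ht.1.le, ht.2.le⟩))
    rw [h0, h1] at this
    rw [this, dist_self]
    positivity

open Filter Topology in
lemma aux_cont {K : Set Pt} {f F : Pt → ℝ}
    (hF : Continuous F) (hfF : ∀ x ∈ K, f x = F x)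
    (hloc : ∀ x ∉ K, ∀ᶠ y in 𝓝 x, f y = f x)
    (hfr : ∀ x ∈ K, ∀ᶠ y in 𝓝 x, y ∉ K → f y = f x) : Continuous f := by
  rw [continuous_iff_continuousAt]
  intro x
  by_cases hx : x ∈ K
  · rw [Metric.continuousAt_iff']
    intro ε hε
    filter_upwards [hfr x hx, Metric.continuousAt_iff'.1 hF.continuousAt ε hε] with y h1 h2
    by_cases hy : y ∈ K
    · rwa [hfF y hy, hfF x hx]
    · rw [h1 hy, dist_self]; exact hε
  · exact continuousAt_const.congr (f := fun _ => f x) ((hloc x hx).mono fun y hy => hy.symm)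

open Filter Topology in
/-- Integration by parts for functions which are constant off `closure Ω`. -/
lemma aux_parts {Ω : Set Pt} (hΩ : IsOpen Ω) (hnull : volume (frontier Ω) = 0)
    {f F φ : Pt → ℝ} (hF : ContDiff ℝ 1 F) (hFc : ∃ C, LipschitzWith C F)
    (hf : Continuous f) (hfF : ∀ x ∈ closure Ω, f x = F x)
    (hloc : ∀ x ∉ closure Ω, ∀ᶠ y in 𝓝 x, f y = f x)
    (hφ : ContDiff ℝ 1 φ) (hφc : HasCompactSupport φ) (i : Fin 2) :
    NegInt (fun x => f x * pd i φ x) (Ω.indicator (fun x => pd i F x * φ x)) := by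
  obtain ⟨C, hC⟩ := hFc
  obtain ⟨D, hD⟩ := ContDiff.lipschitzWith_of_hasCompactSupport hφc hφ (by simp)
  have hfl := aux_lip isClosed_closure hC hf hfF hloc
  have hcφ : Continuous (pd i φ) := by
    unfold pd
    exact (hφ.continuous_fderiv (by simp)).clm_apply continuous_const
  have hcF : Continuous (pd i F) := by
    unfold pd
    exact (hF.continuous_fderiv (by simp)).clm_apply continuous_const
  have hsφ : HasCompactSupport (pd i φ) := by
    exact hφc.fderiv_apply ℝ (EuclideanSpace.single i 1)
  refine ⟨?_, ?_, ?_⟩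
  · exact (hf.mul hcφ).integrable_of_hasCompactSupport hsφ.mul_left
  · exact ((hcF.mul hφ.continuous).integrable_of_hasCompactSupport hφc.mul_left).indicator
      hΩ.measurableSet
  have key := LipschitzWith.integral_lineDeriv_mul_eq (μ := (volume : Measure Pt)) hfl hD hφc
    (EuclideanSpace.single i 1)
  have h1 : ∫ x, lineDeriv ℝ f x (EuclideanSpace.single i 1) * φ x
      = ∫ x, Ω.indicator (fun x => pd i F x * φ x) x := by
    apply integral_congr_ae
    filter_upwards [compl_mem_ae_iff.2 hnull] with x hx
    by_cases hxΩ : x ∈ Ω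
    · rw [indicator_of_mem hxΩ]
      have : f =ᶠ[𝓝 x] F := by
        filter_upwards [hΩ.mem_nhds hxΩ] with y hy using hfF y (subset_closure hy)
      rw [this.lineDeriv_eq, ((hF.differentiable (by simp)) x).lineDeriv_eq_fderiv]
      rfl
    · rw [indicator_of_notMem hxΩ]
      have hxc : x ∉ closure Ω := fun h => hx ⟨h, fun h' => hxΩ (interior_subset h')⟩
      have : f =ᶠ[𝓝 x] fun _ => f x := hloc x hxc
      rw [this.lineDeriv_eq]
      simp [lineDeriv]
  rw [← h1, key, ← integral_neg]
  congr 1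
  ext x
  rw [((hφ.differentiable (by simp)) x).lineDeriv_eq_fderiv]
  simp [pd, mul_comm]

open Filter Topology in
/-- Integration by parts for functions extended by zero. -/
lemma aux_parts0 {Ω : Set Pt} (hΩ : IsOpen Ω) (hnull : volume (frontier Ω) = 0)
    {f F : Pt → ℝ} (hF : ContDiff ℝ 1 F) (hFc : HasCompactSupport F)
    (hfF : ∀ x ∈ closure Ω, f x = F x) (hfr : ∀ x ∈ frontier Ω, F x = 0)
    (hloc : ∀ x ∉ closure Ω, f x = 0) :
    Continuous f ∧ ∀ (φ : Pt → ℝ) (_ : ContDiff ℝ 1 φ) (_ : HasCompactSupport φ) (i : Fin 2),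
    NegInt (fun x => f x * pd i φ x) (Ω.indicator (fun x => pd i F x * φ x)) := by
  have hloc' : ∀ x ∉ closure Ω, ∀ᶠ y in 𝓝 x, f y = f x := fun x hx => by
    filter_upwards [isClosed_closure.isOpen_compl.mem_nhds hx] with y hy
    rw [hloc x hx, hloc y hy]
  have hc : Continuous f := by
    refine aux_cont hF.continuous hfF hloc' ?_
    intro x hx
    by_cases hxΩ : x ∈ Ω
    · filter_upwards [hΩ.mem_nhds hxΩ] with y hy h using absurd (subset_closure hy) h
    · refine Eventually.of_forall fun y hy => ?_
      rw [hloc y hy, hfF x hx, hfr x (by rw [hΩ.frontier_eq]; exact ⟨hx, hxΩ⟩)]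
  exact ⟨hc, fun φ h1 h2 i => aux_parts hΩ hnull hF
    (ContDiff.lipschitzWith_of_hasCompactSupport hFc hF (by simp)) hc hfF hloc' h1 h2 i⟩

lemma aux_pre {A S : Set Pt} (hA : IsPreconnected A) (hS : IsOpen S) (hd : Disjoint A (frontier S))
    (hne : (A ∩ S).Nonempty) : A ⊆ S := by
  by_contra hcon
  obtain ⟨y, hy, hyS⟩ := Set.not_subset.1 hcon
  have := hA S (closure S)ᶜ hS isClosed_closure.isOpen_compl (fun z hz => by
    by_cases h : z ∈ S
    · exact Or.inl h
    · exact Or.inr fun h2 => Set.disjoint_left.1 hd hz (by rw [hS.frontier_eq]; exact ⟨h2, h⟩))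
    hne ⟨y, hy, fun h2 => Set.disjoint_left.1 hd hy (by rw [hS.frontier_eq]; exact ⟨h2, hyS⟩)⟩
  obtain ⟨z, _, h1, h2⟩ := this
  exact h2 (subset_closure h1)

lemma aux_closed {Γ : Set Pt} (h : IsSmoothJordanCurve Γ) : IsClosed Γ := by
  obtain ⟨γ, hγ, hper, -, -, rfl⟩ := h
  rw [← hper.image_Icc (by positivity) 0]
  exact (isCompact_Icc.image hγ.continuous).isClosed

lemma aux_null {Γ : Set Pt} (h : IsSmoothJordanCurve Γ) : volume Γ = 0 := by
  obtain ⟨γ, hγ, hper, -, -, rfl⟩ := h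
  have hd : Differentiable ℝ γ := hγ.differentiable (by simp)
  let P : Pt →L[ℝ] ℝ := EuclideanSpace.proj 0
  have hP : ∀ x ∈ (univ : Set Pt), HasFDerivWithinAt (fun x : Pt => γ (P x))
      ((fderiv ℝ γ (P x)).comp P) univ x := fun x _ =>
    ((hd (P x)).hasFDerivAt.comp x P.hasFDerivAt).hasFDerivWithinAt
  have := addHaar_image_eq_zero_of_det_fderivWithin_eq_zero (volume : Measure Pt) hP (fun x _ => by
    by_contra hdet
    have hinj : Function.Injective ((fderiv ℝ γ (P x)).comp P) := by
      by_contra hni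
      apply hdet
      by_contra h0
      apply hni
      exact (LinearMap.equivOfDetNeZero ((fderiv ℝ γ (P x)).comp P).toLinearMap h0).injective
    have h1 : ((fderiv ℝ γ (P x)).comp P) (EuclideanSpace.single 1 1)
      = ((fderiv ℝ γ (P x)).comp P) 0 := by simp [P]
    have h2 := hinj h1
    have h3 := congrArg (fun z : Pt => z 1) h2
    simp at h3)
  refine measure_mono_null ?_ this
  rintro _ ⟨t, rfl⟩
  exact ⟨EuclideanSpace.single 0 t, mem_univ _, by simp [P]⟩

/-- A smooth Jordan curve locally has two sides. -/
lemma aux_sides {Γ O : Set Pt} (h : IsSmoothJordanCurve Γ) {x : Pt} (hx : x ∈ Γ)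
    (hO : IsOpen O) (hxO : x ∈ O) :
    ∃ N A B : Set Pt, IsOpen N ∧ x ∈ N ∧ N \ Γ ⊆ A ∪ B ∧ A ⊆ O ∧ B ⊆ O ∧
      IsPreconnected A ∧ IsPreconnected B ∧ Disjoint A Γ ∧ Disjoint B Γ := by
  obtain ⟨γ, hγ, hper, hinj, hreg, rfl⟩ := h
  obtain ⟨t₀, rfl⟩ := hx
  set d := deriv γ t₀ with hd
  let n : Pt := !₂[-(d 1), d 0]
  let F : ℝ × ℝ → Pt := fun q => γ q.1 + q.2 • n
  have hFc : ContDiff ℝ 1 F :=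
    ((hγ.of_le (by exact_mod_cast le_top)).comp contDiff_fst).add (contDiff_snd.smul contDiff_const)
  let L : ℝ × ℝ →L[ℝ] Pt := (ContinuousLinearMap.fst ℝ ℝ ℝ).smulRight d
    + (ContinuousLinearMap.snd ℝ ℝ ℝ).smulRight n
  have hγd : HasDerivAt γ d t₀ := ((hγ.differentiable (by simp)) t₀).hasDerivAt
  have hFL : HasFDerivAt F L (t₀, 0) := by
    have h1 : HasFDerivAt (fun q : ℝ × ℝ => γ q.1) ((ContinuousLinearMap.fst ℝ ℝ ℝ).smulRight d)
        (t₀, 0) := by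
      have := HasFDerivAt.comp (g := γ) (f := fun q : ℝ × ℝ => q.1) (t₀, (0:ℝ)) hγd.hasFDerivAt
        hasFDerivAt_fst
      exact this
    have h2 : HasFDerivAt (fun q : ℝ × ℝ => q.2 • n) ((ContinuousLinearMap.snd ℝ ℝ ℝ).smulRight n)
        (t₀, 0) := ((ContinuousLinearMap.snd ℝ ℝ ℝ).smulRight n).hasFDerivAt
    exact h1.add h2
  have hLinj : Function.Injective L.toLinearMap := by
    rw [injective_iff_map_eq_zero]
    rintro ⟨a, b⟩ hab
    have h0 := congrArg (fun z : Pt => z 0) hab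
    have h1 := congrArg (fun z : Pt => z 1) hab
    simp [L, n] at h0 h1
    have hdne : 0 < d 0 ^ 2 + d 1 ^ 2 := by
      by_contra hcon
      have e0 : d 0 = 0 := by nlinarith [sq_nonneg (d 0), sq_nonneg (d 1)]
      have e1 : d 1 = 0 := by nlinarith [sq_nonneg (d 0), sq_nonneg (d 1)]
      apply hreg t₀
      ext i
      fin_cases i
      · simpa using e0
      · simpa using e1
    have ea : a * (d 0 ^ 2 + d 1 ^ 2) = 0 := by linear_combination d 0 * h0 + d 1 * h1
    have eb : b * (d 0 ^ 2 + d 1 ^ 2) = 0 := by linear_combination d 0 * h1 - d 1 * h0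
    have ea' := (mul_eq_zero.1 ea).resolve_right hdne.ne'
    have eb' := (mul_eq_zero.1 eb).resolve_right hdne.ne'
    simp [ea', eb']
  let E : (ℝ × ℝ) ≃L[ℝ] Pt :=
    (L.toLinearMap.linearEquivOfInjective hLinj (by simp)).toContinuousLinearEquiv
  have hEL : (E : ℝ × ℝ →L[ℝ] Pt) = L := by
    ext q <;> rfl
  have hstrict : HasStrictFDerivAt F (E : ℝ × ℝ →L[ℝ] Pt) (t₀, 0) := by
    rw [hEL]
    exact (hFc.contDiffAt).hasStrictFDerivAt' hFL (by simp)
  let e := hstrict.toOpenPartialHomeomorph F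
  have he : ∀ q, e q = F q := fun q => rfl
  have hsrc : (t₀, (0:ℝ)) ∈ e.source := hstrict.mem_toOpenPartialHomeomorph_source
  obtain ⟨δ₀, hδ₀, hball₀⟩ := Metric.isOpen_iff.1 e.open_source _ hsrc
  let M : Set Pt := γ '' (Icc (t₀ - π) (t₀ + π) \ Metric.ball t₀ δ₀)
  have hM : IsClosed M :=
    ((isCompact_Icc.diff Metric.isOpen_ball).image hγ.continuous).isClosed
  have hxM : γ t₀ ∉ M := by
    rintro ⟨s, ⟨hs, hsb⟩, hst⟩
    obtain ⟨k, hk⟩ := hinj s t₀ hst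
    have hk0 : k = 0 := by
      have hpi := Real.pi_pos
      have h1 : (k:ℝ) < 1 := by
        by_contra hc; push Not at hc; nlinarith [hs.2]
      have h2 : (-1:ℝ) < k := by
        by_contra hc; push Not at hc; nlinarith [hs.1]
      have h1' : k < 1 := by exact_mod_cast h1
      have h2' : -1 < k := by exact_mod_cast h2
      omega
    subst hk0
    have : s = t₀ := by simp at hk; linarith
    subst this
    exact hsb (Metric.mem_ball_self hδ₀)
  have hO' : IsOpen (O ∩ Mᶜ) := hO.inter hM.isOpen_compl
  have hF0 : F (t₀, 0) = γ t₀ := by simp [F]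
  obtain ⟨δ₁, hδ₁, hball₁⟩ := Metric.isOpen_iff.1 (hO'.preimage hFc.continuous) (t₀, (0:ℝ))
    (by rw [mem_preimage, hF0]; exact ⟨hxO, hxM⟩)
  let δ := min δ₀ δ₁
  have hδ : 0 < δ := lt_min hδ₀ hδ₁
  have hb0 : Metric.ball (t₀, (0:ℝ)) δ ⊆ e.source :=
    (Metric.ball_subset_ball (min_le_left _ _)).trans hball₀
  have hb1 : Metric.ball (t₀, (0:ℝ)) δ ⊆ F ⁻¹' (O ∩ Mᶜ) :=
    (Metric.ball_subset_ball (min_le_right _ _)).trans hball₁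
  have hside : ∀ I : Set ℝ, I ⊆ Metric.ball 0 δ → (0:ℝ) ∉ I →
      F '' (Metric.ball t₀ δ ×ˢ I) ⊆ O ∧ Disjoint (F '' (Metric.ball t₀ δ ×ˢ I)) (range γ) := by
    intro I hI h0
    have hsub : Metric.ball t₀ δ ×ˢ I ⊆ Metric.ball (t₀, (0:ℝ)) δ := by
      rw [← ball_prod_same]; exact prod_mono_right hI
    refine ⟨?_, ?_⟩
    · rintro _ ⟨q, hq, rfl⟩
      exact (hb1 (hsub hq)).1
    · rw [Set.disjoint_left]
      rintro _ ⟨q, hq, rfl⟩ ⟨r, hr⟩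
      obtain ⟨r', hr', hrr⟩ := hper.exists_mem_Ico (by positivity) r (t₀ - π)
      rw [hrr] at hr
      have hrb : r' ∈ Metric.ball t₀ δ₀ := by
        by_contra hc
        exact (hb1 (hsub hq)).2 ⟨r', ⟨⟨hr'.1, by linarith [hr'.2]⟩, hc⟩, hr⟩
      have hmem : (r', (0:ℝ)) ∈ e.source := hball₀ (by
        rw [← ball_prod_same]; exact ⟨hrb, Metric.mem_ball_self hδ₀⟩)
      have := e.injOn hmem (hb0 (hsub hq)) (by
        rw [he, he, ← hr]; simp [F])
      apply h0
      have h2 := congrArg Prod.snd this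
      simp only at h2
      rw [h2]
      exact hq.2
  have hpre : ∀ a b : ℝ, IsPreconnected (F '' (Metric.ball t₀ δ ×ˢ Ioo a b)) := fun a b =>
    ((convex_ball t₀ δ).isPreconnected.prod isPreconnected_Ioo).image _ hFc.continuous.continuousOn
  have hA := hside (Ioo 0 δ) (by
    rw [Real.ball_eq_Ioo]; exact Ioo_subset_Ioo (by linarith) (by linarith)) (by simp)
  have hB := hside (Ioo (-δ) 0) (by
    rw [Real.ball_eq_Ioo]; exact Ioo_subset_Ioo (by linarith) (by linarith)) (by simp)
  refine ⟨F '' Metric.ball (t₀, (0:ℝ)) δ, F '' (Metric.ball t₀ δ ×ˢ Ioo 0 δ),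
    F '' (Metric.ball t₀ δ ×ˢ Ioo (-δ) 0), ?_, ?_, ?_, hA.1, hB.1, hpre _ _, hpre _ _, hA.2, hB.2⟩
  · exact e.isOpen_image_of_subset_source Metric.isOpen_ball hb0
  · exact ⟨_, Metric.mem_ball_self hδ, hF0⟩
  · rintro _ ⟨⟨⟨t, s⟩, hq, rfl⟩, hnot⟩
    rw [← ball_prod_same] at hq
    obtain ⟨hq1, hq2⟩ := hq
    simp only [Real.ball_eq_Ioo] at hq2
    rcases lt_trichotomy s 0 with hs | hs | hs
    · exact Or.inr ⟨(t, s), ⟨hq1, by simpa using hq2.1, hs⟩, rfl⟩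
    · exact absurd ⟨t, by simp [F, hs]⟩ hnot
    · exact Or.inl ⟨(t, s), ⟨hq1, hs, by simpa using hq2.2⟩, rfl⟩

open Filter Topology in
lemma aux_near {Ω Ω' Γ₁ Γ₂ : Set Pt} (hΩopen : IsOpen Ω)
    (hfr : frontier Ω = Γ₁ ∪ Γ₂) (hdisj : Disjoint Γ₁ Γ₂)
    (hΓ₁ : IsSmoothJordanCurve Γ₁) (hΓ₂ : IsSmoothJordanCurve Γ₂)
    (hΩ'open : IsOpen Ω') (hΩ'sub : Ω' ⊆ (closure Ω)ᶜ) (hΩ'fr : frontier Ω' = Γ₂)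
    {x : Pt} (hx : x ∈ Γ₂) : ∀ᶠ y in 𝓝 x, y ∉ closure Ω → y ∈ Ω' := by
  obtain ⟨N, A, B, hN, hxN, hNAB, hAO, hBO, hA, hB, hAΓ, hBΓ⟩ := aux_sides hΓ₂ hx
    (aux_closed hΓ₁).isOpen_compl (fun h => Set.disjoint_left.1 hdisj h hx)
  have hAd : Disjoint A (frontier Ω) := by
    rw [hfr, disjoint_union_right]
    exact ⟨Set.disjoint_left.2 fun z hz => hAO hz, hAΓ⟩
  have hBd : Disjoint B (frontier Ω) := by
    rw [hfr, disjoint_union_right]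
    exact ⟨Set.disjoint_left.2 fun z hz => hBO hz, hBΓ⟩
  rw [← hΩ'fr] at hAΓ hBΓ
  have hd1 : ∀ z ∈ Ω, z ∉ Γ₂ := fun z hz hz2 => by
    have : z ∈ frontier Ω := by rw [hfr]; exact Or.inr hz2
    rw [hΩopen.frontier_eq] at this
    exact this.2 hz
  have hd2 : ∀ z ∈ Ω', z ∉ Γ₂ := fun z hz hz2 => by
    rw [← hΩ'fr, hΩ'open.frontier_eq] at hz2
    exact hz2.2 hz
  have hxc : x ∈ closure Ω := frontier_subset_closure (by rw [hfr]; exact Or.inr hx)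
  have hxc' : x ∈ closure Ω' := frontier_subset_closure (by rw [hΩ'fr]; exact hx)
  obtain ⟨y, hyN, hyΩ⟩ := mem_closure_iff.1 hxc N hN hxN
  obtain ⟨z, hzN, hzΩ⟩ := mem_closure_iff.1 hxc' N hN hxN
  have hyAB := hNAB ⟨hyN, hd1 y hyΩ⟩
  have hzAB := hNAB ⟨hzN, hd2 z hzΩ⟩
  have hdj : ∀ q ∈ Ω, q ∉ Ω' := fun q h1 h2 => hΩ'sub h2 (subset_closure h1)
  filter_upwards [hN.mem_nhds hxN] with q hq hqc
  have hqΓ : q ∉ Γ₂ := fun h => hqc (frontier_subset_closure (by rw [hfr]; exact Or.inr h))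
  have hqAB := hNAB ⟨hq, hqΓ⟩
  have hqΩ : q ∉ Ω := fun h => hqc (subset_closure h)
  have a1 : ∀ p ∈ A, p ∈ Ω → A ⊆ Ω := fun p h1 h2 => aux_pre hA hΩopen hAd ⟨p, h1, h2⟩
  have a2 : ∀ p ∈ B, p ∈ Ω → B ⊆ Ω := fun p h1 h2 => aux_pre hB hΩopen hBd ⟨p, h1, h2⟩
  have a3 : ∀ p ∈ A, p ∈ Ω' → A ⊆ Ω' := fun p h1 h2 => aux_pre hA hΩ'open hAΓ ⟨p, h1, h2⟩
  have a4 : ∀ p ∈ B, p ∈ Ω' → B ⊆ Ω' := fun p h1 h2 => aux_pre hB hΩ'open hBΓ ⟨p, h1, h2⟩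
  rcases hyAB with hy | hy
  · have hAΩ := a1 y hy hyΩ
    have hz : z ∈ B := hzAB.resolve_left fun h => hdj z (hAΩ h) hzΩ
    exact a4 z hz hzΩ (hqAB.resolve_left fun h => hqΩ (hAΩ h))
  · have hBΩ := a2 y hy hyΩ
    have hz : z ∈ A := hzAB.resolve_right fun h => hdj z (hBΩ h) hzΩ
    exact a3 z hz hzΩ (hqAB.resolve_right fun h => hqΩ (hBΩ h))

open Filter Topology Manifold in
lemma aux_ext {K V : Set Pt} (hK : IsCompact K) (hV : IsOpen V) (hKV : K ⊆ V) {u : Pt → ℝ}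
    (hu : ContDiffOn ℝ 2 u V) : ∃ g : Pt → ℝ, ContDiff ℝ 2 g ∧ HasCompactSupport g ∧
      ∀ x ∈ K, g =ᶠ[𝓝 x] u := by
  obtain ⟨L, hL, hKL, hLV⟩ := exists_compact_between hK hV hKV
  obtain ⟨χ, h1, h0, -⟩ := exists_contMDiffMap_one_nhds_of_subset_interior (n := 2) 𝓘(ℝ, Pt)
    hK.isClosed hKL
  have hχ : ContDiff ℝ 2 (χ : Pt → ℝ) := contMDiff_iff_contDiff.1 χ.contMDiff
  refine ⟨fun x => χ x * u x, ?_, ?_, ?_⟩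
  · rw [contDiff_iff_contDiffAt]
    intro x
    by_cases hx : x ∈ V
    · exact hχ.contDiffAt.mul (hu.contDiffAt (hV.mem_nhds hx))
    · refine (contDiffAt_const (c := (0:ℝ))).congr_of_eventuallyEq ?_
      filter_upwards [hL.isClosed.isOpen_compl.mem_nhds (fun h => hx (hLV h))] with y hy
      simp [h0 y hy]
  · exact HasCompactSupport.intro hL fun x hx => by simp [h0 x hx]
  · intro x hx
    filter_upwards [eventually_nhdsSet_iff_forall.1 h1 x hx] with y hy
    simp [hy]

/-- With `u` a Neumann eigenfunction of the doubly connected domain `Ω`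
which is locally constant on the boundary, the pair `(v,p)` built out of `u` as in the
text is a continuous, compactly supported stationary weak solution of the 2D
incompressible Euler equations. -/
theorem stationary_weak_euler_solution
    (Ω Ω' Γ₁ Γ₂ : Set Pt) (u : Pt → ℝ) (μ c₁ c₂ : ℝ) (v : Pt → ℝ × ℝ) (p : Pt → ℝ)
    (hΩopen : IsOpen Ω) (hΩbd : Bornology.IsBounded Ω)
    (hfr : frontier Ω = Γ₁ ∪ Γ₂) (hdisj : Disjoint Γ₁ Γ₂)
    (hΓ₁ : IsSmoothJordanCurve Γ₁) (hΓ₂ : IsSmoothJordanCurve Γ₂)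
    (hΩ'open : IsOpen Ω') (hΩ'conn : IsConnected Ω') (hΩ'bd : Bornology.IsBounded Ω')
    (hΩ'sub : Ω' ⊆ (closure Ω)ᶜ)
    (hΩ'comp : ∀ x ∈ Ω', connectedComponentIn (closure Ω)ᶜ x = Ω')
    (hΩ'fr : frontier Ω' = Γ₂)
    (hu : ∃ V : Set Pt, IsOpen V ∧ closure Ω ⊆ V ∧ ContDiffOn ℝ 2 u V)
    (heq : ∀ x ∈ Ω, lap u x + μ * u x = 0)
    (hgrad : ∀ x ∈ frontier Ω, fderiv ℝ u x = 0)
    (hb1 : ∀ x ∈ Γ₁, u x = c₁) (hb2 : ∀ x ∈ Γ₂, u x = c₂)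
    (hv₁ : ∀ x ∈ closure Ω, v x = (pd 1 u x, -pd 0 u x))
    (hv₂ : ∀ x ∉ closure Ω, v x = 0)
    (hp₁ : ∀ x ∈ closure Ω,
      p x = -(1/2) * ((pd 0 u x)^2 + (pd 1 u x)^2 + μ * (u x)^2 - μ * c₁^2))
    (hp₂ : ∀ x ∈ Ω', p x = -(1/2) * (μ * (c₂^2 - c₁^2)))
    (hp₃ : ∀ x, x ∉ closure Ω → x ∉ Ω' → p x = 0) :
    Continuous p ∧
    (∀ w : Pt → ℝ × ℝ, ContDiff ℝ (⊤ : ℕ∞) w → HasCompactSupport w →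
      ∫ x, ((v x).1 * (v x).1 * pd 0 (fun y => (w y).1) x
          + (v x).1 * (v x).2 * pd 0 (fun y => (w y).2) x
          + (v x).2 * (v x).1 * pd 1 (fun y => (w y).1) x
          + (v x).2 * (v x).2 * pd 1 (fun y => (w y).2) x
          + p x * (pd 0 (fun y => (w y).1) x + pd 1 (fun y => (w y).2) x)) = 0) ∧
    Continuous v ∧ HasCompactSupport v ∧
    (∀ φ : Pt → ℝ, ContDiff ℝ (⊤ : ℕ∞) φ → HasCompactSupport φ →
      ∫ x, ((v x).1 * pd 0 φ x + (v x).2 * pd 1 φ x) = 0) := by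
  obtain ⟨V, hV, hKV, huV⟩ := hu
  have hKc : IsCompact (closure Ω) := hΩbd.isCompact_closure
  obtain ⟨g, hg, hgc, hgu⟩ := aux_ext hKc hV hKV huV
  have hnull : volume (frontier Ω) = 0 := by
    rw [hfr]; exact measure_union_null (aux_null hΓ₁) (aux_null hΓ₂)
  have hfc : ∀ x ∈ frontier Ω, x ∈ closure Ω := fun x hx => frontier_subset_closure hx
  have e0 : ∀ x ∈ closure Ω, u x = g x := fun x hx => (hgu x hx).eq_of_nhds.symm
  have e1' : ∀ x ∈ closure Ω, ∀ i, Filter.EventuallyEq (nhds x) (pd i g) (pd i u) := fun x hx i => by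
    filter_upwards [(hgu x hx).fderiv (𝕜 := ℝ)] with y hy
    simp only [pd, hy]
  have e1 : ∀ x ∈ closure Ω, ∀ i, pd i u x = pd i g x := fun x hx i =>
    (e1' x hx i).eq_of_nhds.symm
  have e2 : ∀ x ∈ closure Ω, ∀ i j, pd i (pd j u) x = pd i (pd j g) x := fun x hx i j => by
    have := ((e1' x hx j).fderiv (𝕜 := ℝ)).eq_of_nhds
    simp only [pd] at this ⊢
    rw [this]
  have heq' : ∀ x ∈ Ω, pd 0 (pd 0 g) x + pd 1 (pd 1 g) x + μ * g x = 0 := fun x hx => by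
    have h := heq x hx
    have hx' := subset_closure hx
    rwa [lap, e2 x hx', e2 x hx', e0 x hx'] at h
  have hz : ∀ x ∈ frontier Ω, ∀ i, pd i g x = 0 := fun x hx i => by
    rw [← e1 x (hfc x hx), pd, hgrad x hx]; simp
  have hG : ∀ i, ContDiff ℝ 1 (pd i g) := fun i => pd_contDiff i hg
  have hGs : ∀ i, HasCompactSupport (pd i g) := fun i =>
    hgc.fderiv_apply ℝ (EuclideanSpace.single i 1)
  have hGd : ∀ i x, DifferentiableAt ℝ (pd i g) x := fun i x =>
    (hG i).differentiable (by simp) x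
  have hgd : ∀ x, DifferentiableAt ℝ g x := fun x => hg.differentiable (by simp) x
  have hg1 : ContDiff ℝ 1 g := hg.of_le (by norm_num)
  -- the velocity
  obtain ⟨cv1, pv1⟩ := aux_parts0 (f := fun x => (v x).1) hΩopen hnull (hG 1) (hGs 1)
    (fun x hx => by simp only [hv₁ x hx, e1 x hx]) (fun x hx => hz x hx 1)
    (fun x hx => by simp [hv₂ x hx])
  obtain ⟨cv2, pv2⟩ := aux_parts0 (f := fun x => (v x).2) (F := fun x => - pd 0 g x) hΩopen hnull
    (hG 0).neg (hGs 0).neg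
    (fun x hx => by simp only [hv₁ x hx, e1 x hx]) (fun x hx => by simp [hz x hx 0])
    (fun x hx => by simp [hv₂ x hx])
  obtain ⟨-, p11⟩ := aux_parts0 (f := fun x => (v x).1 * (v x).1)
    (F := fun x => pd 1 g x * pd 1 g x) hΩopen hnull
    ((hG 1).mul (hG 1)) (hGs 1).mul_left
    (fun x hx => by simp only [hv₁ x hx, e1 x hx]) (fun x hx => by simp [hz x hx 1])
    (fun x hx => by simp [hv₂ x hx])
  obtain ⟨-, p12⟩ := aux_parts0 (f := fun x => (v x).1 * (v x).2)
    (F := fun x => - (pd 1 g x * pd 0 g x)) hΩopen hnull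
    ((hG 1).mul (hG 0)).neg ((hGs 1).mul_right (f' := pd 0 g)).neg
    (fun x hx => by simp only [hv₁ x hx, e1 x hx]; ring) (fun x hx => by simp [hz x hx 1])
    (fun x hx => by simp [hv₂ x hx])
  obtain ⟨-, p22⟩ := aux_parts0 (f := fun x => (v x).2 * (v x).2)
    (F := fun x => pd 0 g x * pd 0 g x) hΩopen hnull
    ((hG 0).mul (hG 0)) (hGs 0).mul_left
    (fun x hx => by simp only [hv₁ x hx, e1 x hx]; ring) (fun x hx => by simp [hz x hx 0])
    (fun x hx => by simp [hv₂ x hx])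
  -- the pressure
  let Q : Pt → ℝ := fun x => -(1/2) * (pd 0 g x * pd 0 g x + pd 1 g x * pd 1 g x + μ * (g x * g x))
  let P : Pt → ℝ := fun x => Q x + (1/2) * (μ * c₁^2)
  have hQ : ContDiff ℝ 1 Q :=
    contDiff_const.mul ((((hG 0).mul (hG 0)).add ((hG 1).mul (hG 1))).add
      (contDiff_const.mul (hg1.mul hg1)))
  have hQs : HasCompactSupport Q :=
    ((((hGs 0).mul_left (f := pd 0 g)).add ((hGs 1).mul_left (f := pd 1 g))).add
      ((hgc.mul_left (f := g)).mul_left (f := fun _ => μ))).mul_left (f := fun _ => -(1/2))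
  have hP : ContDiff ℝ 1 P := hQ.add contDiff_const
  have hPl : ∃ C, LipschitzWith C P := by
    obtain ⟨C, hC⟩ := ContDiff.lipschitzWith_of_hasCompactSupport hQs hQ (by simp)
    refine ⟨C, LipschitzWith.of_dist_le_mul fun x y => ?_⟩
    have := hC.dist_le_mul x y
    simpa [P] using this
  have hpP : ∀ x ∈ closure Ω, p x = P x := fun x hx => by
    rw [hp₁ x hx, e1 x hx, e1 x hx, e0 x hx]
    simp only [P, Q]; ring
  have hploc : ∀ x ∉ closure Ω, ∀ᶠ y in nhds x, p y = p x := by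
    intro x hx
    by_cases hx' : x ∈ Ω'
    · filter_upwards [hΩ'open.mem_nhds hx'] with y hy
      rw [hp₂ x hx', hp₂ y hy]
    · have hxc : x ∉ closure Ω' := fun h => by
        have : x ∈ frontier Ω' := by rw [hΩ'open.frontier_eq]; exact ⟨h, hx'⟩
        rw [hΩ'fr] at this
        exact hx (hfc x (by rw [hfr]; exact Or.inr this))
      filter_upwards [isClosed_closure.isOpen_compl.mem_nhds hx,
        isClosed_closure.isOpen_compl.mem_nhds hxc] with y hy hy'
      rw [hp₃ x hx hx', hp₃ y hy fun h => hy' (subset_closure h)]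
  have hpc : Continuous p := by
    refine aux_cont hP.continuous hpP hploc ?_
    intro x hx
    by_cases hxΩ : x ∈ Ω
    · filter_upwards [hΩopen.mem_nhds hxΩ] with y hy h using absurd (subset_closure hy) h
    have hxf : x ∈ frontier Ω := by rw [hΩopen.frontier_eq]; exact ⟨hx, hxΩ⟩
    have hzx := fun i => (e1 x hx i).trans (hz x hxf i)
    rcases (hfr ▸ hxf : x ∈ Γ₁ ∪ Γ₂) with h | h
    · have hpx : p x = 0 := by
        rw [hp₁ x hx, hzx, hzx, hb1 x h]; ring
      have hxc : x ∉ closure Ω' := fun h' => by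
        by_cases hx' : x ∈ Ω'
        · exact hΩ'sub hx' hx
        · have : x ∈ frontier Ω' := by rw [hΩ'open.frontier_eq]; exact ⟨h', hx'⟩
          rw [hΩ'fr] at this
          exact Set.disjoint_left.1 hdisj h this
      filter_upwards [isClosed_closure.isOpen_compl.mem_nhds hxc] with y hy hy'
      rw [hpx, hp₃ y hy' fun h => hy (subset_closure h)]
    · have hpx : p x = -(1/2) * (μ * (c₂^2 - c₁^2)) := by
        rw [hp₁ x hx, hzx, hzx, hb2 x h]; ring
      filter_upwards [aux_near hΩopen hfr hdisj hΓ₁ hΓ₂ hΩ'open hΩ'sub hΩ'fr h] with y hy hy'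
      rw [hpx, hp₂ y (hy hy')]
  have pP : ∀ (φ : Pt → ℝ) (_ : ContDiff ℝ 1 φ) (_ : HasCompactSupport φ) (i : Fin 2),
      NegInt (fun x => p x * pd i φ x) (Ω.indicator (fun x => pd i P x * φ x)) :=
    fun φ h1 h2 i => aux_parts hΩopen hnull hP hPl hpc hpP hploc h1 h2 i
  have dP : ∀ i x, pd i P x = -(pd 0 g x * pd i (pd 0 g) x + pd 1 g x * pd i (pd 1 g) x
      + μ * (g x * pd i g x)) := by
    intro i x
    have d0 := hGd 0 x
    have d1 := hGd 1 x
    have d2 := hgd x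
    simp only [P, Q]
    rw [pd_add' i (by fun_prop) (by fun_prop), pd_const', pd_mul' i (by fun_prop) (by fun_prop),
      pd_const', pd_add' i (by fun_prop) (by fun_prop), pd_add' i (by fun_prop) (by fun_prop),
      pd_mul' i (by fun_prop) (by fun_prop), pd_mul' i (by fun_prop) (by fun_prop),
      pd_mul' i (by fun_prop) (by fun_prop), pd_const', pd_mul' i (by fun_prop) (by fun_prop)]
    ring
  refine ⟨hpc, ?_, cv1.prodMk cv2, ?_, ?_⟩
  · intro w hw hwc
    have hw1 : ContDiff ℝ 1 (fun y => (w y).1) := (hw.of_le (by exact_mod_cast le_top)).fst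
    have hw2 : ContDiff ℝ 1 (fun y => (w y).2) := (hw.of_le (by exact_mod_cast le_top)).snd
    have hs1 : HasCompactSupport (fun y => (w y).1) := hwc.comp_left (g := Prod.fst) rfl
    have hs2 : HasCompactSupport (fun y => (w y).2) := hwc.comp_left (g := Prod.snd) rfl
    refine (((((p11 _ hw1 hs1 0).add' (p12 _ hw2 hs2 0)).add' (p12 _ hw1 hs1 1)).add'
      (p22 _ hw2 hs2 1)).add' ((pP _ hw1 hs1 0).add' (pP _ hw2 hs2 1))).zero ?_ ?_
    · intro x
      by_cases hx : x ∈ Ω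
      · simp only [indicator_of_mem hx, dP, pd_neg', pd_mul' _ (hGd _ x) (hGd _ x)]
        have h := heq' x hx
        have hc := pd_comm hg x
        rw [hc]
        linear_combination (-(pd 0 g x) * (w x).1 - (pd 1 g x) * (w x).2) * h
      · simp [indicator_of_notMem hx]
    · intro x
      ring
  · refine HasCompactSupport.intro hKc fun x hx => hv₂ x hx
  · intro φ hφ hφc
    have hφ1 : ContDiff ℝ 1 φ := hφ.of_le (by exact_mod_cast le_top)
    refine ((pv1 _ hφ1 hφc 0).add' (pv2 _ hφ1 hφc 1)).zero ?_ (fun x => rfl)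
    intro x
    by_cases hx : x ∈ Ω
    · simp only [indicator_of_mem hx, pd_neg', pd_comm hg x]
      ring
    · simp [indicator_of_notMem hx]

end
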